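/- Let μ be a Borel probability measure on ℝ with μ([0,1]) = 1 and with no atoms, and let 0 < ε < 1. Then there exist an integer M ≥ 1 and points 0 = x_0 < x_1 < x_2 < ... < x_M = 1 with ε/3 < x_{i+1} − x_i < ε for all 0 ≤ i < M, such that for every η > 0, μ(⋃_{i=1}^{M−1} (x_i − η, x_i)) ≤ 6η/ε and μ(⋃_{i=1}^{M−1} (x_i, x_i + η)) ≤ 6η/ε. -/

import Mathlib

open MeasureTheory

/-!
Put the interior points at `s, s + ε/2, …, s + kε/2`: only `s` is left to choose, in an interval of
length more than `ε/3`, and only its class in the circle `ℝ / (ε/2)ℤ` matters. Push `μ` forward to a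
measure `ν` on this circle. If no `s` works, every `s` lies in an open arc `J` with
`ν J > (6/ε) |J| ν(univ)`. Finitely many of these arcs cover the compact set of candidates, and a
minimal subcover covers no point three times, since among three arcs with a common point one is
contained in the union of the other two. Summing over this subcover, the candidates have total
length at most `2 / (6/ε) = ε/3`, a contradiction.
-/

open Set Metric Filter
open scoped ENNReal Topology

section MaximalInequality

variable {X ι : Type*}

/-- Among any three members of the family `A` with a common point, one is contained in the union of
the other two. Open arcs of a circle have this property, and it is all that the covering
argument uses about them. -/
def HasRedundantTriples (A : ι → Set X) : Prop :=
  ∀ i j k, (A i ∩ A j ∩ A k).Nonempty →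
    A i ⊆ A j ∪ A k ∨ A j ⊆ A i ∪ A k ∨ A k ⊆ A i ∪ A j

open scoped Classical in
theorem HasRedundantTriples.exists_cover_card_le_two {A : ι → Set X}
    (hA : HasRedundantTriples A) {K : Set X} {t : Finset ι} (ht : K ⊆ ⋃ i ∈ t, A i) :
    ∃ t' : Finset ι, K ⊆ ⋃ i ∈ t', A i ∧ ∀ x, (t'.filter (x ∈ A ·)).card ≤ 2 := by
  obtain ⟨t', -, hcover, hmin⟩ :=
    exists_minimal_le_of_wellFoundedLT (fun t : Finset ι => K ⊆ ⋃ i ∈ t, A i) t ht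
  have irredundant : ∀ i ∈ t', ∀ j ∈ t', ∀ k ∈ t', i ≠ j → i ≠ k → ¬ A i ⊆ A j ∪ A k := by
    intro i hi j hj k hk hij hik hsub
    have hcover' : K ⊆ ⋃ l ∈ t'.erase i, A l := by
      intro x hx
      obtain ⟨l, hl, hxl⟩ := mem_iUnion₂.1 (hcover hx)
      rcases eq_or_ne l i with rfl | hli
      · rcases hsub hxl with hxj | hxk
        · exact mem_biUnion (Finset.mem_erase.2 ⟨hij.symm, hj⟩) hxj
        · exact mem_biUnion (Finset.mem_erase.2 ⟨hik.symm, hk⟩) hxk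
      · exact mem_biUnion (Finset.mem_erase.2 ⟨hli, hl⟩) hxl
    exact Finset.notMem_erase i t' (hmin hcover' (t'.erase_subset i) hi)
  refine ⟨t', hcover, fun x => ?_⟩
  by_contra! hcard
  obtain ⟨i, hi, j, hj, k, hk, hij, hik, hjk⟩ := Finset.two_lt_card.1 hcard
  rw [Finset.mem_filter] at hi hj hk
  rcases hA i j k ⟨x, ⟨hi.2, hj.2⟩, hk.2⟩ with h | h | h
  · exact irredundant i hi.1 j hj.1 k hk.1 hij hik h
  · exact irredundant j hj.1 i hi.1 k hk.1 hij.symm hjk h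
  · exact irredundant k hk.1 i hi.1 j hj.1 hik.symm hjk.symm h

open scoped Classical in
theorem sum_measure_le_natCast_mul_measure_univ [MeasurableSpace X] (ν : Measure X) {A : ι → Set X}
    {t : Finset ι} (hA : ∀ i ∈ t, MeasurableSet (A i)) {n : ℕ}
    (hn : ∀ x, (t.filter (x ∈ A ·)).card ≤ n) :
    ∑ i ∈ t, ν (A i) ≤ n * ν univ := by
  calc ∑ i ∈ t, ν (A i) = ∑ i ∈ t, ∫⁻ x, (A i).indicator 1 x ∂ν :=
        Finset.sum_congr rfl fun i hi => (lintegral_indicator_one (hA i hi)).symm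
    _ = ∫⁻ x, ∑ i ∈ t, (A i).indicator 1 x ∂ν :=
        (lintegral_finsetSum t fun i hi => measurable_one.indicator (hA i hi)).symm
    _ = ∫⁻ x, ((t.filter (x ∈ A ·)).card : ℝ≥0∞) ∂ν := by
        simp only [indicator_apply, Pi.one_apply, Finset.sum_boole]
    _ ≤ ∫⁻ _, n ∂ν := lintegral_mono fun x => Nat.cast_le.2 (hn x)
    _ = n * ν univ := lintegral_const _

variable [TopologicalSpace X] [MeasurableSpace X] [OpensMeasurableSpace X]

theorem HasRedundantTriples.mul_measure_le_two_mul_measure_univ {A : ι → Set X}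
    (hA : HasRedundantTriples A) (hopen : ∀ i, IsOpen (A i)) {lam ν : Measure X} {C : ℝ≥0∞}
    (hheavy : ∀ i, C * lam (A i) ≤ ν (A i)) {K : Set X} (hK : IsCompact K) (hKA : K ⊆ ⋃ i, A i) :
    C * lam K ≤ 2 * ν univ := by
  classical
  obtain ⟨t, ht⟩ := hK.elim_finite_subcover A hopen hKA
  obtain ⟨t', hcover, hcard⟩ := hA.exists_cover_card_le_two ht
  calc C * lam K ≤ C * ∑ i ∈ t', lam (A i) := by
        gcongr
        exact (measure_mono hcover).trans (measure_biUnion_finset_le t' A)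
    _ = ∑ i ∈ t', C * lam (A i) := Finset.mul_sum ..
    _ ≤ ∑ i ∈ t', ν (A i) := Finset.sum_le_sum fun i _ => hheavy i
    _ ≤ 2 * ν univ :=
        sum_measure_le_natCast_mul_measure_univ ν (fun i _ => (hopen i).measurableSet) hcard

theorem HasRedundantTriples.exists_mem_forall_measure_le {A : ι → Set X}
    (hA : HasRedundantTriples A) (hopen : ∀ i, IsOpen (A i)) {lam : Measure X} (ν : Measure X)
    [IsFiniteMeasure ν] {C : ℝ≥0∞} {K : Set X} (hK : IsCompact K) (hC : 2 < C * lam K) :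
    ∃ s ∈ K, ∀ i, s ∈ A i → ν (A i) ≤ C * lam (A i) * ν univ := by
  by_contra! hheavy
  have hν : ν univ ≠ 0 := by
    have hKne : K.Nonempty := nonempty_of_measure_ne_zero (μ := lam) fun h => by
      rw [h, mul_zero] at hC
      exact not_lt_zero hC
    obtain ⟨s, hs⟩ := hKne
    obtain ⟨i, -, hi⟩ := hheavy s hs
    exact ((zero_le.trans_lt hi).trans_le (measure_mono (subset_univ _))).ne'
  let Heavy := {i // C * lam (A i) * ν univ < ν (A i)}
  have hHeavy : HasRedundantTriples fun i : Heavy => A i := fun i j k => hA i j k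
  have hcover : K ⊆ ⋃ i : Heavy, A i := fun s hs => by
    obtain ⟨i, hsi, hi⟩ := hheavy s hs
    exact mem_iUnion.2 ⟨⟨i, hi⟩, hsi⟩
  have hle : C * ν univ * lam K ≤ 2 * ν univ :=
    hHeavy.mul_measure_le_two_mul_measure_univ (fun i => hopen i)
      (fun i => by rw [mul_right_comm]; exact i.2.le) hK hcover
  rw [mul_right_comm, ENNReal.mul_le_mul_iff_left hν (measure_ne_top ν univ)] at hle
  exact hC.not_ge hle

end MaximalInequality

section AddCircle

theorem hasRedundantTriples_Ioo {R : Type*} [LinearOrder R] :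
    HasRedundantTriples fun I : R × R => Ioo I.1 I.2 := by
  rintro ⟨l₁, u₁⟩ ⟨l₂, u₂⟩ ⟨l₃, u₃⟩ ⟨z, ⟨hz₁, hz₂⟩, hz₃⟩
  simp only [subset_def, mem_union, mem_Ioo] at *
  grind

variable {p : ℝ}

theorem exists_ball_eq_image_coe_add_Ioo {z x : AddCircle p} {r : ℝ} (hz : z ∈ ball x r) :
    ∃ l u : ℝ, 0 ∈ Ioo l u ∧ ball x r = (fun t : ℝ => (t : AddCircle p) + z) '' Ioo l u := by
  rw [mem_ball, dist_eq_norm] at hz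
  obtain ⟨m, hm, hmr⟩ := QuotientAddGroup.norm_lt_iff.1 hz
  rw [Real.norm_eq_abs, abs_lt] at hmr
  refine ⟨-m - r, -m + r, ⟨by linarith, by linarith⟩, ?_⟩
  ext y
  rw [mem_ball, dist_eq_norm, QuotientAddGroup.norm_lt_iff]
  constructor
  · rintro ⟨q, hq, hqr⟩
    rw [Real.norm_eq_abs, abs_lt] at hqr
    refine ⟨q - m, ⟨by linarith, by linarith⟩, ?_⟩
    change ((q : AddCircle p) - (m : AddCircle p)) + z = y
    rw [hq, hm]
    abel
  · rintro ⟨t, ht, rfl⟩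
    refine ⟨t + m, ?_, ?_⟩
    · rw [QuotientAddGroup.mk_add, hm, add_sub_assoc]
    · rw [Real.norm_eq_abs, abs_lt]
      constructor <;> linarith [ht.1, ht.2]

theorem hasRedundantTriples_addCircle_ball :
    HasRedundantTriples fun B : AddCircle p × ℝ => ball B.1 B.2 := by
  rintro ⟨x₁, r₁⟩ ⟨x₂, r₂⟩ ⟨x₃, r₃⟩ ⟨z, ⟨hz₁, hz₂⟩, hz₃⟩
  obtain ⟨l₁, u₁, h₁, hball₁⟩ := exists_ball_eq_image_coe_add_Ioo hz₁
  obtain ⟨l₂, u₂, h₂, hball₂⟩ := exists_ball_eq_image_coe_add_Ioo hz₂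
  obtain ⟨l₃, u₃, h₃, hball₃⟩ := exists_ball_eq_image_coe_add_Ioo hz₃
  simp only [hball₁, hball₂, hball₃, ← image_union]
  exact (hasRedundantTriples_Ioo (l₁, u₁) (l₂, u₂) (l₃, u₃) ⟨0, ⟨h₁, h₂⟩, h₃⟩).imp image_mono
    (Or.imp image_mono image_mono)

theorem iUnion_Ioo_add_zsmul_subset_preimage_ball (x r : ℝ) :
    ⋃ n : ℤ, Ioo (x + n • p - r) (x + n • p + r) ⊆
      ((↑) : ℝ → AddCircle p) ⁻¹' ball (x : AddCircle p) r := by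
  refine iUnion_subset fun n t ht => ?_
  rw [← Real.ball_eq_Ioo, mem_ball, Real.dist_eq] at ht
  rw [mem_preimage, mem_ball, dist_eq_norm, QuotientAddGroup.norm_lt_iff]
  refine ⟨t - (x + n • p), ?_, ht⟩
  change (t : AddCircle p) - ((x + n • p : ℝ) : AddCircle p) = _
  rw [AddCircle.coe_add, AddCircle.coe_zsmul, AddCircle.coe_period, smul_zero, add_zero]

variable [Fact (0 < p)]

theorem addCircle_volume_ball_le (x : AddCircle p) (r : ℝ) :
    volume (ball x r) ≤ ENNReal.ofReal (2 * r) := by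
  refine (measure_mono ball_subset_closedBall).trans ?_
  rw [AddCircle.volume_closedBall]
  exact ENNReal.ofReal_le_ofReal (min_le_right _ _)

theorem ofReal_sub_le_volume_image_coe_Icc {u v : ℝ} (hvp : v ≤ u + p) :
    ENNReal.ofReal (v - u) ≤ volume (((↑) : ℝ → AddCircle p) '' Icc u v) := by
  have hcompact : IsCompact (((↑) : ℝ → AddCircle p) '' Icc u v) :=
    isCompact_Icc.image (AddCircle.continuous_mk' p)
  rw [AddCircle.add_projection_respects_measure p u hcompact.measurableSet, ← Real.volume_Ioc]
  exact measure_mono fun x hx =>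
    ⟨mem_image_of_mem _ (Ioc_subset_Icc_self hx), Ioc_subset_Ioc_right hvp hx⟩

theorem exists_mem_Icc_forall_measure_ball_le (ν : Measure (AddCircle p)) [IsFiniteMeasure ν]
    {u v C : ℝ} (hvp : v ≤ u + p) (hC0 : 0 ≤ C) (hC : 2 < C * (v - u)) :
    ∃ s ∈ Icc u v, ∀ (x : AddCircle p) (r : ℝ), (s : AddCircle p) ∈ closedBall x r →
      ν (ball x r) ≤ ENNReal.ofReal (C * (2 * r)) * ν univ := by
  have hK : 2 < ENNReal.ofReal C * volume (((↑) : ℝ → AddCircle p) '' Icc u v) :=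
    calc (2 : ℝ≥0∞) < ENNReal.ofReal (C * (v - u)) := by
          rwa [← ENNReal.ofReal_ofNat, ENNReal.ofReal_lt_ofReal_iff_of_nonneg zero_le_two]
      _ = ENNReal.ofReal C * ENNReal.ofReal (v - u) := ENNReal.ofReal_mul hC0
      _ ≤ _ := by gcongr; exact ofReal_sub_le_volume_image_coe_Icc hvp
  obtain ⟨_, ⟨s, hs, rfl⟩, hball⟩ :=
    hasRedundantTriples_addCircle_ball.exists_mem_forall_measure_le (fun _ => isOpen_ball) ν
      (isCompact_Icc.image (AddCircle.continuous_mk' p)) hK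
  refine ⟨s, hs, fun x r hsx => ?_⟩
  have hle : ∀ r' ∈ Ioi r, ν (ball x r) ≤ ENNReal.ofReal (C * (2 * r')) * ν univ := fun r' hr' =>
    calc ν (ball x r) ≤ ν (ball x r') := measure_mono (ball_subset_ball (le_of_lt hr'))
      _ ≤ ENNReal.ofReal C * volume (ball x r') * ν univ :=
          hball (x, r') (closedBall_subset_ball hr' hsx)
      _ ≤ ENNReal.ofReal C * ENNReal.ofReal (2 * r') * ν univ := by
          gcongr
          exact addCircle_volume_ball_le x r'
      _ = ENNReal.ofReal (C * (2 * r')) * ν univ := by rw [ENNReal.ofReal_mul hC0]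
  have hcont : Continuous fun r' => ENNReal.ofReal (C * (2 * r')) * ν univ :=
    (ENNReal.continuous_mul_const (measure_ne_top ν univ)).comp
      (ENNReal.continuous_ofReal.comp (by fun_prop))
  exact ge_of_tendsto ((hcont.tendsto r).mono_left nhdsWithin_le_nhds)
    (eventually_mem_nhdsWithin.mono hle)

end AddCircle

theorem exists_mem_Icc_forall_measure_iUnion_Ioo_le (μ : Measure ℝ) [IsFiniteMeasure μ]
    {p u v C : ℝ} (hp : 0 < p) (hvp : v ≤ u + p) (hC0 : 0 ≤ C) (hC : 2 < C * (v - u)) :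
    ∃ s ∈ Icc u v, ∀ η₁ η₂ : ℝ, 0 ≤ η₁ → 0 ≤ η₂ →
      μ (⋃ n : ℤ, Ioo (s + n • p - η₁) (s + n • p + η₂)) ≤
        ENNReal.ofReal (C * (η₁ + η₂)) * μ univ := by
  have : Fact (0 < p) := ⟨hp⟩
  have hcoe : Measurable ((↑) : ℝ → AddCircle p) := AddCircle.measurable_mk'
  obtain ⟨s, hs, hball⟩ :=
    exists_mem_Icc_forall_measure_ball_le (μ.map ((↑) : ℝ → AddCircle p)) hvp hC0 hC
  refine ⟨s, hs, fun η₁ η₂ hη₁ hη₂ => ?_⟩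
  obtain ⟨x, hx⟩ : ∃ x, x = s + (η₂ - η₁) / 2 := ⟨_, rfl⟩
  obtain ⟨r, hr⟩ : ∃ r, r = (η₁ + η₂) / 2 := ⟨_, rfl⟩
  have hsx : (s : AddCircle p) ∈ closedBall (x : AddCircle p) r := by
    rw [mem_closedBall, dist_eq_norm]
    refine (QuotientAddGroup.norm_mk_le_norm (m := s - x)).trans ?_
    rw [Real.norm_eq_abs, abs_le]
    constructor <;> linarith
  calc μ (⋃ n : ℤ, Ioo (s + n • p - η₁) (s + n • p + η₂))
      ≤ μ (⋃ n : ℤ, Ioo (x + n • p - r) (x + n • p + r)) :=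
        measure_mono (iUnion_mono fun n => Ioo_subset_Ioo (by linarith) (by linarith))
    _ ≤ μ.map (↑) (ball (x : AddCircle p) r) := by
        rw [Measure.map_apply hcoe measurableSet_ball]
        exact measure_mono (iUnion_Ioo_add_zsmul_subset_preimage_ball x r)
    _ ≤ ENNReal.ofReal (C * (2 * r)) * μ.map ((↑) : ℝ → AddCircle p) univ := hball x r hsx
    _ = ENNReal.ofReal (C * (η₁ + η₂)) * μ univ := by
        rw [Measure.map_apply hcoe .univ, preimage_univ, hr, mul_div_cancel₀ _ two_ne_zero]

theorem exists_nat_sub_mul_mem_Ioc {R : Type*} [Field R] [LinearOrder R] [IsStrictOrderedRing R]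
    [Archimedean R] {p c t : R} (hp : 0 < p) (hct : c < t) :
    ∃ k : ℕ, t - k * p ∈ Ioc c (c + p) := by
  obtain ⟨m, hm, -⟩ := existsUnique_sub_zsmul_mem_Ioc hp t c
  rw [zsmul_eq_mul] at hm
  have hm0 : 0 ≤ m := by
    have hmp : 0 < ((m + 1 : ℤ) : R) * p := by
      push_cast
      linarith [hm.2]
    exact Int.lt_add_one_iff.1 (Int.cast_pos.1 (pos_of_mul_pos_left hmp hp.le))
  lift m to ℕ using hm0
  exact ⟨m, by simpa using hm⟩

/-- The partition points `a, s, s + p, …, s + k * p, b`, with indices `0, …, k + 2`; all later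
indices give `b`. -/
def progressionPartition (a b s p : ℝ) (k : ℕ) : ℕ → ℝ
  | 0 => a
  | i + 1 => if i ≤ k then s + i * p else b

namespace progressionPartition

variable {a b s p : ℝ} {k : ℕ}

theorem succ_of_le {i : ℕ} (hi : i ≤ k) : progressionPartition a b s p k (i + 1) = s + i * p :=
  if_pos hi

theorem last : progressionPartition a b s p k (k + 2) = b :=
  if_neg (Nat.not_succ_le_self k)

theorem succ_sub_mem_Ioo {lo hi : ℝ} (hfirst : s - a ∈ Ioo lo hi) (hp : p ∈ Ioo lo hi)
    (hlast : b - (s + k * p) ∈ Ioo lo hi) {i : ℕ} (hik : i < k + 2) :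
    progressionPartition a b s p k (i + 1) - progressionPartition a b s p k i ∈ Ioo lo hi := by
  rcases i with _ | i
  · simpa [progressionPartition] using hfirst
  · rcases (Nat.lt_succ_iff.1 (Nat.lt_of_succ_lt_succ hik)).eq_or_lt with rfl | hi
    · rwa [last, succ_of_le le_rfl]
    · rw [succ_of_le hi, succ_of_le hi.le]
      convert hp using 1
      push_cast
      ring

theorem biUnion_Ioo_subset (η₁ η₂ : ℝ) :
    ⋃ i ∈ Finset.Ico 1 (k + 2), Ioo (progressionPartition a b s p k i - η₁)
      (progressionPartition a b s p k i + η₂) ⊆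
    ⋃ n : ℤ, Ioo (s + n • p - η₁) (s + n • p + η₂) := by
  refine iUnion₂_subset fun i hi => ?_
  obtain ⟨h1, hik⟩ := Finset.mem_Ico.1 hi
  obtain ⟨j, rfl⟩ := Nat.exists_eq_add_of_le' h1
  rw [succ_of_le (by omega)]
  exact subset_iUnion_of_subset j (by simp)

end progressionPartition

theorem stmt_4_general (μ : Measure ℝ) [IsFiniteMeasure μ] {a b ε : ℝ} (hε : 0 < ε)
    (hab : ε < b - a) :
    ∃ (M : ℕ) (x : ℕ → ℝ), 1 ≤ M ∧ x 0 = a ∧ x M = b ∧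
      (∀ i < M, x (i + 1) - x i ∈ Ioo (ε / 3) ε) ∧
      ∀ η₁ η₂ : ℝ, 0 ≤ η₁ → 0 ≤ η₂ →
        μ (⋃ i ∈ Finset.Ico 1 M, Ioo (x i - η₁) (x i + η₂)) ≤
          ENNReal.ofReal (6 * (η₁ + η₂) / ε) * μ univ := by
  obtain ⟨k, hk⟩ := exists_nat_sub_mul_mem_Ioc (half_pos hε) hab
  -- An interval of length `ε / 3 + w / 4` about the point at which the two end gaps agree.
  obtain ⟨u, v, hlen, hvp, hends⟩ : ∃ u v, ε / 3 < v - u ∧ v ≤ u + ε / 2 ∧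
      ∀ s ∈ Icc u v, s - a ∈ Ioo (ε / 3) ε ∧ b - (s + k * (ε / 2)) ∈ Ioo (ε / 3) ε := by
    obtain ⟨w, hw⟩ : ∃ w, w = b - a - k * (ε / 2) - ε := ⟨_, rfl⟩
    refine ⟨a + (ε + w) / 2 - (ε / 6 + w / 8), a + (ε + w) / 2 + (ε / 6 + w / 8),
      by linarith [hk.1], by linarith [hk.2], fun s hs => ⟨⟨?_, ?_⟩, ?_, ?_⟩⟩ <;>
    linarith [hs.1, hs.2, hk.1, hk.2]
  obtain ⟨s, hs, hμ⟩ := exists_mem_Icc_forall_measure_iUnion_Ioo_le μ (half_pos hε) hvp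
    (C := 6 / ε) (by positivity) (by rw [div_mul_eq_mul_div, lt_div_iff₀ hε]; linarith)
  refine ⟨k + 2, progressionPartition a b s (ε / 2) k, by omega, rfl,
    progressionPartition.last, fun i hi => ?_, fun η₁ η₂ hη₁ hη₂ => ?_⟩
  · exact progressionPartition.succ_sub_mem_Ioo (hends s hs).1 ⟨by linarith, by linarith⟩
      (hends s hs).2 hi
  · rw [mul_div_right_comm]
    exact (measure_mono (progressionPartition.biUnion_Ioo_subset η₁ η₂)).trans (hμ η₁ η₂ hη₁ hη₂)

/-- Lemma 9 (smart partition lemma): for any atomless Borel probability measure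
on `[0,1]` and `0 < ε < 1`, there is a partition `0 = x₀ < x₁ < ⋯ < x_M = 1`
with gaps strictly between `ε/3` and `ε` such that for every `η > 0`, the
`η`-neighborhoods on either side of the interior boundary points carry mass
at most `6η/ε`. -/
theorem stmt_4 (μ : Measure ℝ) [IsProbabilityMeasure μ]
    (hμ1 : μ (Set.Icc (0 : ℝ) 1) = 1) (hatom : ∀ t : ℝ, μ {t} = 0)
    (ε : ℝ) (hε : 0 < ε) (hε1 : ε < 1) :
    ∃ (M : ℕ) (x : ℕ → ℝ), 1 ≤ M ∧ x 0 = 0 ∧ x M = 1 ∧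
      (∀ i < M, ε / 3 < x (i + 1) - x i ∧ x (i + 1) - x i < ε) ∧
      (∀ η > (0 : ℝ),
        μ (⋃ i ∈ Finset.Ico 1 M, Set.Ioo (x i - η) (x i)) ≤
          ENNReal.ofReal (6 * η / ε) ∧
        μ (⋃ i ∈ Finset.Ico 1 M, Set.Ioo (x i) (x i + η)) ≤
          ENNReal.ofReal (6 * η / ε)) := by
  obtain ⟨M, x, hM, h0, h1, hgap, hμ⟩ := stmt_4_general μ (a := 0) (b := 1) hε (by linarith)
  exact ⟨M, x, hM, h0, h1, hgap, fun η hη =>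
    ⟨by simpa using hμ η 0 hη.le le_rfl, by simpa using hμ 0 η le_rfl hη.le⟩⟩
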